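/- The backward error η of the approximate eigenpairs (λ̂_i, v̂_i), i = 1,…,p, satisfies η ≤ σ_p̂(G ⊙^T V^T)^{−1} ‖R‖_F, where p̂ is the rank of G ⊙^T V^T and σ_p̂(G ⊙^T V^T) is its smallest nonzero singular value. -/

import Mathlib

open Matrix Kronecker BigOperators

noncomputable section

/-- Frobenius norm of a complex matrix. -/
def fnorm {ι κ : Type*} [Fintype ι] [Fintype κ] (A : Matrix ι κ ℂ) : ℝ :=
  Real.sqrt (∑ i, ∑ j, ‖A i j‖ ^ 2)

/-- Euclidean norm of a complex vector. -/
def vnorm {ι : Type*} [Fintype ι] (v : ι → ℂ) : ℝ :=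
  Real.sqrt (∑ i, ‖v i‖ ^ 2)

/-- The four Moore–Penrose conditions. -/
def IsMoorePenrose {ι κ : Type*} [Fintype ι] [Fintype κ]
    (A : Matrix ι κ ℂ) (B : Matrix κ ι ℂ) : Prop :=
  A * B * A = A ∧ B * A * B = B ∧ (A * B)ᴴ = A * B ∧ (B * A)ᴴ = B * A

open scoped Classical in
/-- The Moore–Penrose pseudoinverse (defined by choice; it always exists and is unique). -/
noncomputable def pinv {ι κ : Type*} [Fintype ι] [Fintype κ] (A : Matrix ι κ ℂ) :
    Matrix κ ι ℂ :=
  if h : ∃ B, IsMoorePenrose A B then h.choose else 0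

/-- `s` is a singular value of `A`: `s ≥ 0` and `s²` is an eigenvalue of `Aᴴ A`. -/
def IsSingularValue {ι κ : Type*} [Fintype ι] [Fintype κ] (A : Matrix ι κ ℂ) (s : ℝ) : Prop :=
  0 ≤ s ∧ ∃ w : κ → ℂ, w ≠ 0 ∧ (Aᴴ * A).mulVec w = ((s : ℂ) ^ 2) • w

/-- The smallest nonzero singular value of `A`, i.e. `σ_p̂(A)` where `p̂ = rank A`. -/
noncomputable def sigmaMinPos {ι κ : Type*} [Fintype ι] [Fintype κ] (A : Matrix ι κ ℂ) : ℝ :=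
  sInf {s : ℝ | IsSingularValue A s ∧ 0 < s}

/-- The smallest singular value of a square matrix `A`, the minimum of `‖A v‖₂` over
unit vectors `v`. -/
noncomputable def sigmaMinSq {n : ℕ} (A : Matrix (Fin n) (Fin n) ℂ) : ℝ :=
  sInf {x : ℝ | ∃ w : Fin n → ℂ, vnorm w = 1 ∧ x = vnorm (A.mulVec w)}

/-- The transposed Khatri–Rao product `G ⊙^T W` of `G : p × k` and `W : p × n`:
the `p × kn` matrix whose `i`-th row is `[G i 1 • (row i of W), …, G i k • (row i of W)]`. -/
def krt {p k n : ℕ} (G : Matrix (Fin p) (Fin k) ℂ) (W : Matrix (Fin p) (Fin n) ℂ) :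
    Matrix (Fin p) (Fin k × Fin n) ℂ :=
  Matrix.of fun i jl => G i jl.1 * W i jl.2

/-!
Stack the coefficients into the block row `𝓕 = [F₁, …, F_k]` and put `A = G ⊙ᵀ Vᵀ`. The residual
satisfies `Rᵀ = A 𝓕ᵀ`, and `δ𝓕` is an admissible perturbation exactly when `A (𝓕 + δ𝓕)ᵀ = 0`. Hence
`δ𝓕 = -Xᵀ` is admissible as soon as `A X = Rᵀ`. Taking for `X` the columnwise projection of `𝓕ᵀ`
onto `(ker A)ᗮ`, on which `A` expands by at least its smallest nonzero singular value, gives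
`‖X‖_F ≤ σ⁻¹ ‖R‖_F`.
-/

section LinearMap

variable {𝕜 E E' : Type*} [RCLike 𝕜]
  [NormedAddCommGroup E] [InnerProductSpace 𝕜 E] [FiniteDimensional 𝕜 E]
  [NormedAddCommGroup E'] [InnerProductSpace 𝕜 E'] [FiniteDimensional 𝕜 E']

theorem norm_apply_sq_eq_sum_eigenvalues_mul (T : E →ₗ[𝕜] E') {d : ℕ}
    (hd : Module.finrank 𝕜 E = d) (x : E) :
    ‖T x‖ ^ 2 = ∑ i, T.isPositive_adjoint_comp_self.isSymmetric.eigenvalues hd i *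
      ‖inner 𝕜 (T.isPositive_adjoint_comp_self.isSymmetric.eigenvectorBasis hd i) x‖ ^ 2 := by
  set hS := T.isPositive_adjoint_comp_self.isSymmetric
  set b := hS.eigenvectorBasis hd
  have inner_basis (i : Fin d) : inner 𝕜 (b i) ((T.adjoint ∘ₗ T) x) =
      (hS.eigenvalues hd i : 𝕜) * inner 𝕜 (b i) x := by
    rw [← b.repr_apply_apply, ← b.repr_apply_apply]
    exact hS.eigenvectorBasis_apply_self_apply hd x i
  have inner_sum : inner 𝕜 (T x) (T x) =
      ((∑ i, hS.eigenvalues hd i * ‖inner 𝕜 (b i) x‖ ^ 2 : ℝ) : 𝕜) := by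
    calc inner 𝕜 (T x) (T x)
        = inner 𝕜 x ((T.adjoint ∘ₗ T) x) := by
          rw [LinearMap.comp_apply, LinearMap.adjoint_inner_right]
      _ = ∑ i, inner 𝕜 x (b i) * inner 𝕜 (b i) ((T.adjoint ∘ₗ T) x) :=
          (b.sum_inner_mul_inner _ _).symm
      _ = ∑ i, (hS.eigenvalues hd i : 𝕜) * (‖inner 𝕜 (b i) x‖ : 𝕜) ^ 2 := by
          refine Finset.sum_congr rfl fun i _ => ?_
          rw [inner_basis, ← RCLike.conj_mul, inner_conj_symm]
          ring
      _ = _ := by push_cast; rfl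
  rw [inner_self_eq_norm_sq_to_K] at inner_sum
  exact_mod_cast inner_sum

theorem norm_le_mul_norm_apply_of_mem_orthogonal_ker (T : E →ₗ[𝕜] E') {C : ℝ} (hC : 0 ≤ C)
    (hT : ∀ μ : ℝ, 0 < μ → Module.End.HasEigenvalue (T.adjoint ∘ₗ T) (μ : 𝕜) → 1 ≤ C ^ 2 * μ)
    {x : E} (hx : x ∈ T.kerᗮ) : ‖x‖ ≤ C * ‖T x‖ := by
  have hP := T.isPositive_adjoint_comp_self
  set b := hP.isSymmetric.eigenvectorBasis rfl
  set μ := hP.isSymmetric.eigenvalues rfl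
  have inner_eq_zero (i) (hi : μ i = 0) : inner 𝕜 (b i) x = 0 := by
    refine hx _ ?_
    rw [← LinearMap.ker_adjoint_comp_self, LinearMap.mem_ker,
      hP.isSymmetric.apply_eigenvectorBasis]
    simp [μ, hi]
  have norm_apply_sq : ‖T x‖ ^ 2 = ∑ i, μ i * ‖inner 𝕜 (b i) x‖ ^ 2 :=
    norm_apply_sq_eq_sum_eigenvalues_mul T rfl x
  refine le_of_sq_le_sq ?_ (by positivity)
  rw [mul_pow, norm_apply_sq, ← b.sum_sq_norm_inner_right, Finset.mul_sum]
  refine Finset.sum_le_sum fun i _ => ?_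
  obtain hi | hi : μ i = 0 ∨ 0 < μ i := (hP.nonneg_eigenvalues rfl i).eq_or_lt'
  · simp [inner_eq_zero i hi]
  · rw [← mul_assoc]
    exact le_mul_of_one_le_left (sq_nonneg _)
      (hT _ hi (hP.isSymmetric.hasEigenvalue_eigenvalues rfl i))

end LinearMap

section SingularValues

variable {ι κ : Type*} [Fintype ι] [Fintype κ]

theorem isSingularValue_iff_hasEigenvalue [DecidableEq κ] (A : Matrix ι κ ℂ) (s : ℝ) :
    IsSingularValue A s ↔ 0 ≤ s ∧ Module.End.HasEigenvalue
      ((toEuclideanLin A).adjoint ∘ₗ toEuclideanLin A) ((s : ℂ) ^ 2) := by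
  classical
  have apply_eq (w : κ → ℂ) : ((toEuclideanLin A).adjoint ∘ₗ toEuclideanLin A) (WithLp.toLp 2 w) =
      WithLp.toLp 2 ((Aᴴ * A) *ᵥ w) := by
    simp only [← toEuclideanLin_conjTranspose_eq_adjoint, LinearMap.comp_apply, toLpLin_toLp,
      toLin'_apply, mulVec_mulVec]
  refine and_congr_right fun _ => ⟨fun ⟨w, hw, hws⟩ => ?_, fun h => ?_⟩
  · refine Module.End.hasEigenvalue_of_hasEigenvector (x := WithLp.toLp 2 w)
      ⟨Module.End.mem_eigenspace_iff.2 ?_, (WithLp.toLp_eq_zero 2).not.2 hw⟩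
    rw [apply_eq, hws, WithLp.toLp_smul]
  · obtain ⟨x, hx⟩ := h.exists_hasEigenvector
    refine ⟨x.ofLp, (WithLp.ofLp_eq_zero 2).not.2 hx.2, ?_⟩
    exact congrArg WithLp.ofLp ((apply_eq x.ofLp).symm.trans hx.apply_eq_smul)

theorem finite_setOf_isSingularValue (A : Matrix ι κ ℂ) : {s | IsSingularValue A s}.Finite := by
  classical
  simp only [isSingularValue_iff_hasEigenvalue]
  refine Set.Finite.of_finite_image ((Module.End.finite_hasEigenvalue
    ((toEuclideanLin A).adjoint ∘ₗ toEuclideanLin A)).subset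
      (Set.image_subset_iff.2 fun s hs => hs.2)) ?_
  rintro s ⟨hs, -⟩ t ⟨ht, -⟩ hst
  change (s : ℂ) ^ 2 = (t : ℂ) ^ 2 at hst
  exact (pow_left_inj₀ hs ht two_ne_zero).1 (by exact_mod_cast hst)

theorem sigmaMinPos_nonneg (A : Matrix ι κ ℂ) : 0 ≤ sigmaMinPos A :=
  Real.sInf_nonneg fun _ hs => hs.2.le

theorem IsSingularValue.sigmaMinPos_le {A : Matrix ι κ ℂ} {s : ℝ} (hs : IsSingularValue A s)
    (hpos : 0 < s) : sigmaMinPos A ≤ s :=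
  csInf_le ⟨0, fun _ ht => ht.2.le⟩ ⟨hs, hpos⟩

theorem IsSingularValue.sigmaMinPos_pos {A : Matrix ι κ ℂ} {s : ℝ} (hs : IsSingularValue A s)
    (hpos : 0 < s) : 0 < sigmaMinPos A := by
  have hfin : {t | IsSingularValue A t ∧ 0 < t}.Finite :=
    (finite_setOf_isSingularValue A).subset fun _ ht => ht.1
  have hmem : sigmaMinPos A ∈ {t | IsSingularValue A t ∧ 0 < t} :=
    Set.Nonempty.csInf_mem ⟨s, hs, hpos⟩ hfin
  exact hmem.2

-- For `A = 0` both `sigmaMinPos A = sInf ∅` and its inverse are `0`; the bound then reads `x = 0`.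
theorem norm_le_inv_sigmaMinPos_mul_norm [DecidableEq κ] (A : Matrix ι κ ℂ)
    {x : EuclideanSpace ℂ κ} (hx : x ∈ (toEuclideanLin A).kerᗮ) :
    ‖x‖ ≤ (sigmaMinPos A)⁻¹ * ‖toEuclideanLin A x‖ := by
  refine norm_le_mul_norm_apply_of_mem_orthogonal_ker _ (inv_nonneg.2 (sigmaMinPos_nonneg A))
    (fun μ hμ hev => ?_) hx
  have hs : IsSingularValue A √μ := by
    refine (isSingularValue_iff_hasEigenvalue A _).2 ⟨μ.sqrt_nonneg, ?_⟩
    rwa [← Complex.ofReal_pow, Real.sq_sqrt hμ.le]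
  have hpos := hs.sigmaMinPos_pos (Real.sqrt_pos.2 hμ)
  rw [inv_pow, ← div_eq_inv_mul, one_le_div (by positivity)]
  exact (Real.le_sqrt' hpos).1 (hs.sigmaMinPos_le (Real.sqrt_pos.2 hμ))

theorem exists_mulVec_eq_norm_le (A : Matrix ι κ ℂ) (y : κ → ℂ) :
    ∃ x : κ → ℂ, A *ᵥ x = A *ᵥ y ∧
      ‖WithLp.toLp 2 x‖ ≤ (sigmaMinPos A)⁻¹ * ‖WithLp.toLp 2 (A *ᵥ y)‖ := by
  classical
  set K := (toEuclideanLin A).ker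
  set x := Kᗮ.starProjection (WithLp.toLp 2 y)
  have hxy : toEuclideanLin A x = toEuclideanLin A (WithLp.toLp 2 y) := by
    have := Kᗮ.sub_starProjection_mem_orthogonal (WithLp.toLp 2 y)
    rw [Submodule.orthogonal_orthogonal, LinearMap.mem_ker, map_sub, sub_eq_zero] at this
    exact this.symm
  refine ⟨x.ofLp, congrArg WithLp.ofLp hxy, ?_⟩
  have hx := norm_le_inv_sigmaMinPos_mul_norm A (Kᗮ.starProjection_apply_mem (WithLp.toLp 2 y))
  rwa [hxy] at hx

end SingularValues

section Frobenius

variable {ι κ ν : Type*} [Fintype ι] [Fintype κ] [Fintype ν]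

theorem fnorm_nonneg (A : Matrix ι κ ℂ) : 0 ≤ fnorm A :=
  Real.sqrt_nonneg _

theorem fnorm_neg (A : Matrix ι κ ℂ) : fnorm (-A) = fnorm A := by
  simp [fnorm]

theorem fnorm_transpose (A : Matrix ι κ ℂ) : fnorm Aᵀ = fnorm A :=
  congrArg Real.sqrt Finset.sum_comm

theorem fnorm_sq_eq_sum_norm_col (A : Matrix ι κ ℂ) :
    fnorm A ^ 2 = ∑ j, ‖WithLp.toLp 2 (A.col j)‖ ^ 2 := by
  rw [fnorm, Real.sq_sqrt (by positivity), Finset.sum_comm]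
  simp [EuclideanSpace.norm_sq_eq]

theorem exists_mul_eq_fnorm_le (A : Matrix ι κ ℂ) (Y : Matrix κ ν ℂ) :
    ∃ X : Matrix κ ν ℂ, A * X = A * Y ∧ fnorm X ≤ (sigmaMinPos A)⁻¹ * fnorm (A * Y) := by
  choose x hx hnorm using fun j => exists_mulVec_eq_norm_le A (Y.col j)
  refine ⟨(of x)ᵀ, ?_, ?_⟩
  · ext i j
    exact congrFun (hx j) i
  · refine le_of_sq_le_sq ?_
      (mul_nonneg (inv_nonneg.2 (sigmaMinPos_nonneg A)) (fnorm_nonneg _))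
    rw [mul_pow, fnorm_sq_eq_sum_norm_col, fnorm_sq_eq_sum_norm_col, Finset.mul_sum]
    refine Finset.sum_le_sum fun j _ => ?_
    rw [← mul_pow]
    exact pow_le_pow_left₀ (norm_nonneg _) (hnorm j) 2

end Frobenius

section BlockRow

/-- The block row `[F₁, …, F_k]` of a family of matrices, with columns indexed by pairs (block,
column within the block) to match the columns of `krt`. -/
def blockRow {μ κ ν R : Type*} (F : κ → Matrix μ ν R) : Matrix μ (κ × ν) R :=
  of fun m jl => F jl.1 m jl.2

theorem blockRow_surjective {μ κ ν R : Type*} :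
    Function.Surjective (blockRow : (κ → Matrix μ ν R) → Matrix μ (κ × ν) R) :=
  fun E => ⟨fun j => of fun m l => E m (j, l), rfl⟩

theorem blockRow_add {μ κ ν R : Type*} [Add R] (F F' : κ → Matrix μ ν R) :
    blockRow (F + F') = blockRow F + blockRow F' :=
  rfl

variable {p k n : ℕ} {μ : Type*}

theorem row_krt_mul_transpose_blockRow (G : Matrix (Fin p) (Fin k) ℂ)
    (W : Matrix (Fin p) (Fin n) ℂ) (F : Fin k → Matrix μ (Fin n) ℂ) (i : Fin p) :
    (krt G W * (blockRow F)ᵀ).row i = ∑ j, G i j • (F j *ᵥ W.row i) := by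
  ext m
  simp only [row_apply, Matrix.mul_apply, krt, blockRow, of_apply, transpose_apply,
    Fintype.sum_prod_type, Finset.sum_apply, Pi.smul_apply, mulVec, dotProduct, smul_eq_mul,
    Finset.mul_sum, mul_assoc, mul_comm (W i _)]

theorem transpose_residual_eq_krt_mul (G : Matrix (Fin p) (Fin k) ℂ)
    (V : Matrix (Fin n) (Fin p) ℂ) (F : Fin k → Matrix μ (Fin n) ℂ) :
    (∑ j, F j * V * diagonal fun i => G i j)ᵀ = krt G Vᵀ * (blockRow F)ᵀ := by
  refine Matrix.ext_row fun i => ?_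
  rw [row_krt_mul_transpose_blockRow]
  ext m
  simp only [row_apply, transpose_apply, Matrix.sum_apply, mul_diagonal, Finset.sum_apply,
    Pi.smul_apply, smul_eq_mul, mul_comm (G i _)]
  rfl

end BlockRow

theorem backward_error_upper_bound_general {p k n : ℕ} {μ : Type*} [Fintype μ]
    (F : Fin k → Matrix μ (Fin n) ℂ) (G : Matrix (Fin p) (Fin k) ℂ)
    (V : Matrix (Fin n) (Fin p) ℂ) :
    sInf {x : ℝ | ∃ δF : Fin k → Matrix μ (Fin n) ℂ,
        (∀ i, ∑ j, G i j • ((F j + δF j) *ᵥ V.col i) = 0) ∧ x = fnorm (blockRow δF)}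
      ≤ (sigmaMinPos (krt G Vᵀ))⁻¹ * fnorm (∑ j, F j * V * diagonal fun i => G i j) := by
  set A := krt G Vᵀ
  obtain ⟨X, hX, hXR⟩ := exists_mul_eq_fnorm_le A (blockRow F)ᵀ
  obtain ⟨δF, hδF⟩ := blockRow_surjective (-Xᵀ)
  have mul_eq_zero : A * (blockRow (F + δF))ᵀ = 0 := by
    rw [blockRow_add, hδF, transpose_add, transpose_neg, transpose_transpose, Matrix.mul_add,
      Matrix.mul_neg, hX, add_neg_cancel]
  have admissible (i) : ∑ j, G i j • ((F j + δF j) *ᵥ V.col i) = 0 :=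
    (row_krt_mul_transpose_blockRow G Vᵀ (F + δF) i).symm.trans (congrArg (row · i) mul_eq_zero)
  calc _ ≤ fnorm (blockRow δF) := by
        refine csInf_le ⟨0, ?_⟩ ⟨δF, admissible, rfl⟩
        rintro _ ⟨_, -, rfl⟩
        exact fnorm_nonneg _
    _ = fnorm X := by rw [hδF, fnorm_neg, fnorm_transpose]
    _ ≤ (sigmaMinPos A)⁻¹ * fnorm (∑ j, F j * V * diagonal fun i => G i j) := by
        rwa [← transpose_residual_eq_krt_mul, fnorm_transpose] at hXR

/-- Upper bound for the backward error of approximate eigenpairs: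
`η ≤ σ_p̂(G ⊙ᵀ Vᵀ)⁻¹ ‖R‖_F`, where `p̂` is the rank of `G ⊙ᵀ Vᵀ` and `σ_p̂(G ⊙ᵀ Vᵀ)` is its
smallest nonzero singular value. -/
theorem backward_error_upper_bound (n k p : ℕ)
    (F : Fin k → Matrix (Fin n) (Fin n) ℂ)
    (f : Fin k → ℂ → ℂ) (lam : Fin p → ℂ) (v : Fin p → Fin n → ℂ)
    (G : Matrix (Fin p) (Fin k) ℂ) (hG : ∀ i j, G i j = f j (lam i))
    (V : Matrix (Fin n) (Fin p) ℂ) (hV : ∀ l i, V l i = v i l)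
    (R : Matrix (Fin n) (Fin p) ℂ)
    (hR : R = ∑ j, F j * V * Matrix.diagonal fun i => f j (lam i)) :
    sInf {x : ℝ | ∃ δF : Fin k → Matrix (Fin n) (Fin n) ℂ,
        (∀ i, ∑ j, f j (lam i) • ((F j + δF j).mulVec (v i)) = 0) ∧
        x = fnorm (Matrix.of fun (m : Fin n) (jl : Fin k × Fin n) => δF jl.1 m jl.2)}
      ≤ (sigmaMinPos (krt G Vᵀ))⁻¹ * fnorm R := by
  obtain ⟨rfl, rfl⟩ : G = of (fun i j => f j (lam i)) ∧ V = (of v)ᵀ :=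
    ⟨Matrix.ext hG, Matrix.ext hV⟩
  exact hR ▸ backward_error_upper_bound_general F _ _
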